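/- Let E be a collection of pairwise hom-orthogonal bricks over Λ and let T = ⋁{Filt(Gen(M)) : M ∈ E} in tors Λ. Then the expression ⋁{Filt(Gen(M)) : M ∈ E} is the canonical join representation of T. -/

import Mathlib

/-!
Common definitions: the category `mod Λ` of finite(-dimensional) left `Λ`-modules,
torsion(-free) classes, filtration closures, bricks, minimal (co-)extending modules,
and the lattice-theoretic notions for `tors Λ` (ordered by containment).
-/

/-- A bundled (left) `Λ`-module with carrier in `Type`. -/
structure Mdl (Λ : Type) [Ring Λ] : Type 1 where
  carrier : Type
  [isAddCommGroup : AddCommGroup carrier]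
  [isModule : Module Λ carrier]

attribute [instance] Mdl.isAddCommGroup Mdl.isModule

instance {Λ : Type} [Ring Λ] : CoeSort (Mdl Λ) Type :=
  ⟨Mdl.carrier⟩

variable (Λ : Type) [Ring Λ]

/-- Bundle a module. -/
def Mdl.of (X : Type) [AddCommGroup X] [Module Λ X] : Mdl Λ :=
  { carrier := X }

/-- `M` and `N` are isomorphic `Λ`-modules. -/
def MIso (M N : Mdl Λ) : Prop :=
  Nonempty (M.carrier ≃ₗ[Λ] N.carrier)

/-- `N` is a factor (quotient) module of `M`. -/
def IsFactor (M N : Mdl Λ) : Prop :=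
  ∃ f : M.carrier →ₗ[Λ] N.carrier, Function.Surjective f

/-- `N` is a proper factor of `M` (a quotient by a nonzero submodule). -/
def IsProperFactor (M N : Mdl Λ) : Prop :=
  ∃ f : M.carrier →ₗ[Λ] N.carrier, Function.Surjective f ∧ ¬ Function.Injective f

/-- `N` is (isomorphic to) a submodule of `M`. -/
def IsSubmoduleOf (N M : Mdl Λ) : Prop :=
  ∃ f : N.carrier →ₗ[Λ] M.carrier, Function.Injective f

/-- `N` is (isomorphic to) a proper submodule of `M`. -/
def IsProperSubmoduleOf (N M : Mdl Λ) : Prop :=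
  ∃ f : N.carrier →ₗ[Λ] M.carrier, Function.Injective f ∧ ¬ Function.Surjective f

/-- `D` is (isomorphic to) a direct summand of `N`. -/
def IsSummand (D N : Mdl Λ) : Prop :=
  ∃ (i : D.carrier →ₗ[Λ] N.carrier) (p : N.carrier →ₗ[Λ] D.carrier),
    p.comp i = LinearMap.id

/-- `0 → A --f--> M --g--> B → 0` is a short exact sequence. -/
def IsSES {A M B : Mdl Λ} (f : A.carrier →ₗ[Λ] M.carrier)
    (g : M.carrier →ₗ[Λ] B.carrier) : Prop :=
  Function.Injective f ∧ Function.Surjective g ∧ LinearMap.range f = LinearMap.ker g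

/-- The short exact sequence `0 → A --f--> M --g--> B → 0` splits. -/
def SplitsSES {A M B : Mdl Λ} (_f : A.carrier →ₗ[Λ] M.carrier)
    (g : M.carrier →ₗ[Λ] B.carrier) : Prop :=
  ∃ s : B.carrier →ₗ[Λ] M.carrier, g.comp s = LinearMap.id

/-- `M` is an extension of `B` by `A`, i.e. there is a s.e.s. `0 → A → M → B → 0`. -/
def ExtOf (M A B : Mdl Λ) : Prop :=
  ∃ (f : A.carrier →ₗ[Λ] M.carrier) (g : M.carrier →ₗ[Λ] B.carrier), IsSES Λ f g

/-- A torsion class in `mod Λ`: a class of finite(-dimensional) modules containing `0`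
and closed under isomorphisms, factor modules and extensions. -/
structure IsTorsionClass (T : Set (Mdl Λ)) : Prop where
  fin : ∀ M ∈ T, Module.Finite Λ M.carrier
  zero_mem : ∀ M : Mdl Λ, Subsingleton M.carrier → M ∈ T
  iso_closed : ∀ M ∈ T, ∀ N : Mdl Λ, MIso Λ M N → N ∈ T
  factor_closed : ∀ M ∈ T, ∀ N : Mdl Λ, IsFactor Λ M N → N ∈ T
  ext_closed : ∀ A ∈ T, ∀ B ∈ T, ∀ M : Mdl Λ, ExtOf Λ M A B → M ∈ T

/-- A torsion-free class in `mod Λ`: a class of finite(-dimensional) modules containing `0`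
and closed under isomorphisms, submodules and extensions. -/
structure IsTorsionFreeClass (F : Set (Mdl Λ)) : Prop where
  fin : ∀ M ∈ F, Module.Finite Λ M.carrier
  zero_mem : ∀ M : Mdl Λ, Subsingleton M.carrier → M ∈ F
  iso_closed : ∀ M ∈ F, ∀ N : Mdl Λ, MIso Λ M N → N ∈ F
  sub_closed : ∀ M ∈ F, ∀ N : Mdl Λ, IsSubmoduleOf Λ N M → N ∈ F
  ext_closed : ∀ A ∈ F, ∀ B ∈ F, ∀ M : Mdl Λ, ExtOf Λ M A B → M ∈ F

/-- `Filt S M`: `M` admits a filtration `0 = M₀ ⊆ M₁ ⊆ ⋯ ⊆ M_l = M` whose successive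
quotients are isomorphic to modules in `S`. -/
inductive Filt (S : Set (Mdl Λ)) : Mdl Λ → Prop
  | of_subsingleton (M : Mdl Λ) (h : Subsingleton M.carrier) : Filt S M
  | step (M : Mdl Λ) (N : Submodule Λ M.carrier) (X : Mdl Λ) (hX : X ∈ S)
      (hN : Filt S (Mdl.of Λ N)) (e : Nonempty ((M.carrier ⧸ N) ≃ₗ[Λ] X.carrier)) :
      Filt S M

/-- The filtration closure `Filt(S)` as a set of modules. -/
def FiltSet (S : Set (Mdl Λ)) : Set (Mdl Λ) := {M | Filt Λ S M}

/-- `Gen(M)`: the class of factor modules of finite direct sums of copies of `M`. -/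
def GenSet (M : Mdl Λ) : Set (Mdl Λ) :=
  {N | ∃ (n : ℕ) (f : (Fin n → M.carrier) →ₗ[Λ] N.carrier), Function.Surjective f}

/-- `T^⊥ = {X ∈ mod Λ : Hom_Λ(N, X) = 0 for all N ∈ T}`. -/
def Perp (T : Set (Mdl Λ)) : Set (Mdl Λ) :=
  {X | Module.Finite Λ X.carrier ∧ ∀ N ∈ T, ∀ f : N.carrier →ₗ[Λ] X.carrier, f = 0}

/-- A brick: a module (in `mod Λ`) whose endomorphism ring is a division ring,
i.e. it is nonzero and every nonzero endomorphism is invertible. -/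
def IsBrick (M : Mdl Λ) : Prop :=
  Module.Finite Λ M.carrier ∧ Nontrivial M.carrier ∧
    ∀ f : M.carrier →ₗ[Λ] M.carrier, f ≠ 0 → Function.Bijective f

/-- An indecomposable module: nonzero, and not the direct sum of two nonzero submodules. -/
def Indec (M : Mdl Λ) : Prop :=
  Nontrivial M.carrier ∧
    ∀ p q : Submodule Λ M.carrier, IsCompl p q → p = ⊥ ∨ q = ⊥

/-- `M` is a minimal extending module for the torsion class `T`:
(P1) every proper factor of `M` is in `T`;
(P2) if `0 → M → X → N → 0` is non-split exact with `N ∈ T`, then `X ∈ T`;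
(P3) `Hom_Λ(T, M) = 0`. -/
structure IsMinExt (T : Set (Mdl Λ)) (M : Mdl Λ) : Prop where
  fin : Module.Finite Λ M.carrier
  p1 : ∀ N : Mdl Λ, IsProperFactor Λ M N → N ∈ T
  p2 : ∀ (X N : Mdl Λ) (f : M.carrier →ₗ[Λ] X.carrier) (g : X.carrier →ₗ[Λ] N.carrier),
      IsSES Λ f g → ¬ SplitsSES Λ f g → N ∈ T → X ∈ T
  p3 : ∀ N ∈ T, ∀ f : N.carrier →ₗ[Λ] M.carrier, f = 0

/-- `M` is a minimal co-extending module for the torsion-free class `F`: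
(P1') every proper submodule of `M` is in `F`;
(P2') if `0 → F' → X → M → 0` is non-split exact with `F' ∈ F`, then `X ∈ F`;
(P3') `Hom_Λ(M, F) = 0`. -/
structure IsMinCoExt (F : Set (Mdl Λ)) (M : Mdl Λ) : Prop where
  fin : Module.Finite Λ M.carrier
  p1 : ∀ N : Mdl Λ, IsProperSubmoduleOf Λ N M → N ∈ F
  p2 : ∀ (X F' : Mdl Λ) (f : F'.carrier →ₗ[Λ] X.carrier) (g : X.carrier →ₗ[Λ] M.carrier),
      IsSES Λ f g → ¬ SplitsSES Λ f g → F' ∈ F → X ∈ F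
  p3 : ∀ F' ∈ F, ∀ f : M.carrier →ₗ[Λ] F'.carrier, f = 0

/-- `T'` covers `T` in the lattice `tors Λ` of torsion classes ordered by containment. -/
def TorsCovers (T' T : Set (Mdl Λ)) : Prop :=
  IsTorsionClass Λ T' ∧ IsTorsionClass Λ T ∧ T ⊂ T' ∧
    ∀ Y : Set (Mdl Λ), IsTorsionClass Λ Y → T ⊂ Y → Y ⊆ T' → Y = T'

/-- `F'` covers `F` in the lattice `torf Λ` of torsion-free classes ordered by containment. -/
def TorfCovers (F' F : Set (Mdl Λ)) : Prop :=
  IsTorsionFreeClass Λ F' ∧ IsTorsionFreeClass Λ F ∧ F ⊂ F' ∧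
    ∀ Y : Set (Mdl Λ), IsTorsionFreeClass Λ Y → F ⊂ Y → Y ⊆ F' → Y = F'

/-- The join `⋁ A` of a family of torsion classes in `tors Λ`: the smallest torsion
class containing all members of `A`. -/
def TorsJoin (A : Set (Set (Mdl Λ))) : Set (Mdl Λ) :=
  ⋂₀ {T : Set (Mdl Λ) | IsTorsionClass Λ T ∧ ∀ S ∈ A, S ⊆ T}

/-- A completely join-irreducible element of `tors Λ`: a torsion class `T` such that
`T ∈ A` whenever `A` is a set of torsion classes with `⋁ A = T`. -/
def CompletelyJoinIrred (T : Set (Mdl Λ)) : Prop :=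
  IsTorsionClass Λ T ∧
    ∀ A : Set (Set (Mdl Λ)), (∀ S ∈ A, IsTorsionClass Λ S) → TorsJoin Λ A = T → T ∈ A

/-- The join representation `⋁ A` is irredundant in `tors Λ`:
every proper subset has strictly smaller join. -/
def TorsIrredundant (A : Set (Set (Mdl Λ))) : Prop :=
  ∀ B : Set (Set (Mdl Λ)), B ⊂ A → TorsJoin Λ B ⊂ TorsJoin Λ A

/-- `A` is the canonical join representation of its join in `tors Λ` (equivalently, a face
of the canonical join complex `Γ(tors Λ)`): `⋁ A` is irredundant, and `A ≪ B` for every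
irredundant join representation `⋁ B` of the same element. -/
def TorsCJR (A : Set (Set (Mdl Λ))) : Prop :=
  (∀ S ∈ A, IsTorsionClass Λ S) ∧ TorsIrredundant Λ A ∧
    ∀ B : Set (Set (Mdl Λ)), (∀ S ∈ B, IsTorsionClass Λ S) →
      TorsJoin Λ B = TorsJoin Λ A → TorsIrredundant Λ B → ∀ a ∈ A, ∃ b ∈ B, a ⊆ b

/-- `M` and `N` are hom-orthogonal: `Hom_Λ(M, N) = 0` and `Hom_Λ(N, M) = 0`. -/
def HomOrthogonal (M N : Mdl Λ) : Prop :=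
  (∀ f : M.carrier →ₗ[Λ] N.carrier, f = 0) ∧ ∀ f : N.carrier →ₗ[Λ] M.carrier, f = 0

theorem aux_filt_mem {T : Set (Mdl Λ)} (hT : IsTorsionClass Λ T) {S : Set (Mdl Λ)} (hS : S ⊆ T)
    {M : Mdl Λ} (h : Filt Λ S M) : M ∈ T := by
  induction h with
  | of_subsingleton M h => exact hT.zero_mem M h
  | step M N X hX hN e ih =>
    obtain ⟨e⟩ := e
    refine hT.ext_closed _ ih X (hS hX) M
      ⟨(N.subtype : (Mdl.of Λ N).carrier →ₗ[Λ] M.carrier), e.toLinearMap.comp N.mkQ,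
        Subtype.val_injective, e.surjective.comp N.mkQ_surjective, ?_⟩
    rw [LinearEquiv.ker_comp, Submodule.ker_mkQ]
    exact N.range_subtype

theorem aux_pow_mem {T : Set (Mdl Λ)} (hT : IsTorsionClass Λ T) {M : Mdl Λ} (hM : M ∈ T) (n : ℕ) :
    Mdl.of Λ (Fin n → M.carrier) ∈ T := by
  induction n with
  | zero => exact hT.zero_mem _ (inferInstanceAs (Subsingleton (Fin 0 → M.carrier)))
  | succ n ih =>
    refine hT.ext_closed M hM _ ih _
      ⟨(LinearMap.single Λ (fun _ : Fin (n+1) => M.carrier) 0 :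
          M.carrier →ₗ[Λ] (Fin (n+1) → M.carrier)),
       (LinearMap.funLeft Λ M.carrier (Fin.succ : Fin n → Fin (n+1)) :
          (Fin (n+1) → M.carrier) →ₗ[Λ] (Fin n → M.carrier)), ?_, ?_, ?_⟩
    · exact Pi.single_injective (M := fun _ : Fin (n+1) => M.carrier) 0
    · exact LinearMap.funLeft_surjective_of_injective Λ M.carrier _ (Fin.succ_injective n)
    · apply Submodule.ext
      intro x
      change (Fin (n+1) → M.carrier) at x
      constructor
      · rintro ⟨y, rfl⟩
        change (fun i : Fin n => (Pi.single (0 : Fin (n+1)) y : Fin (n+1) → M.carrier) i.succ) = 0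
        funext i
        simp
      · intro h
        have h' : (fun i : Fin n => x i.succ) = 0 := h
        refine ⟨x 0, ?_⟩
        change (Pi.single (0 : Fin (n+1)) (x 0) : Fin (n+1) → M.carrier) = x
        funext i
        refine Fin.cases ?_ (fun j => ?_) i
        · simp
        · have := congrFun h' j
          simpa using this.symm

theorem aux_gen_sub {T : Set (Mdl Λ)} (hT : IsTorsionClass Λ T) {M : Mdl Λ} (hM : M ∈ T) :
    FiltSet Λ (GenSet Λ M) ⊆ T := by
  intro X hX
  refine aux_filt_mem Λ hT ?_ hX
  rintro N ⟨n, f, hf⟩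
  exact hT.factor_closed _ (aux_pow_mem Λ hT hM n) N ⟨f, hf⟩

theorem aux_mem_gen (M : Mdl Λ) : M ∈ GenSet Λ M :=
  ⟨1, LinearMap.proj 0, fun x => ⟨fun _ => x, rfl⟩⟩

theorem aux_filt_factor {S : Set (Mdl Λ)}
    (hS : ∀ M ∈ S, ∀ N : Mdl Λ, IsFactor Λ M N → N ∈ S)
    {M : Mdl Λ} (h : Filt Λ S M) : ∀ N : Mdl Λ, IsFactor Λ M N → Filt Λ S N := by
  induction h with
  | of_subsingleton M h =>
    rintro Q ⟨q, hq⟩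
    exact .of_subsingleton Q hq.subsingleton
  | step M N X hX hN e ih =>
    rintro Q ⟨q, hq⟩
    obtain ⟨e⟩ := e
    refine .step Q (N.map q) (Mdl.of Λ (Q.carrier ⧸ N.map q)) ?_ ?_
      ⟨LinearEquiv.refl Λ (Q.carrier ⧸ N.map q)⟩
    · refine hS X hX _ ⟨((N.mapQ (N.map q) q (Submodule.le_comap_map q N)).comp
        e.symm.toLinearMap : X.carrier →ₗ[Λ] (Q.carrier ⧸ N.map q)), ?_⟩
      refine Function.Surjective.comp (g := N.mapQ (N.map q) q (Submodule.le_comap_map q N)) ?_ e.symm.surjective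
      intro y
      obtain ⟨y, rfl⟩ := Submodule.mkQ_surjective _ y
      obtain ⟨x, rfl⟩ := hq y
      exact ⟨N.mkQ x, rfl⟩
    · refine ih _ ⟨(q.submoduleMap N : N →ₗ[Λ] N.map q), ?_⟩
      exact q.submoduleMap_surjective N

theorem aux_filt_ext {S : Set (Mdl Λ)}
    (hS : ∀ M ∈ S, ∀ N : Mdl Λ, IsFactor Λ M N → N ∈ S)
    {A : Mdl Λ} (hA : Filt Λ S A) {B : Mdl Λ} (h : Filt Λ S B) :
    ∀ M : Mdl Λ, ExtOf Λ M A B → Filt Λ S M := by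
  induction h with
  | of_subsingleton B h =>
    rintro M ⟨f, g, hf, hg, hfg⟩
    refine aux_filt_factor Λ hS hA M ⟨f, ?_⟩
    rw [← LinearMap.range_eq_top, hfg, LinearMap.ker_eq_top]
    ext x
    exact Subsingleton.elim _ _
  | step B N X hX hN e ih =>
    rintro M ⟨f, g, hf, hg, hfg⟩
    obtain ⟨e⟩ := e
    have hle : ∀ a, f a ∈ N.comap g := by
      intro a
      have : f a ∈ LinearMap.ker g := hfg ▸ ⟨a, rfl⟩
      rw [Submodule.mem_comap, LinearMap.mem_ker.1 this]
      exact N.zero_mem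
    have hsurj : Function.Surjective (N.mkQ.comp g) := N.mkQ_surjective.comp hg
    have hker : LinearMap.ker (N.mkQ.comp g) = N.comap g := by
      rw [LinearMap.ker_comp, Submodule.ker_mkQ]
    refine .step M (N.comap g) X hX (ih _ ?_) ⟨(Submodule.quotEquivOfEq _ _ hker.symm).trans
      (((N.mkQ.comp g).quotKerEquivOfSurjective hsurj).trans e)⟩
    refine ⟨(f.codRestrict (N.comap g) hle : A.carrier →ₗ[Λ] (N.comap g)),
      (g.restrict (p := N.comap g) (q := N) (fun x hx => hx) : (N.comap g) →ₗ[Λ] N), ?_, ?_, ?_⟩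
    · intro a b hab
      exact hf (congrArg Subtype.val hab)
    · rintro ⟨y, hy⟩
      obtain ⟨x, rfl⟩ := hg y
      exact ⟨⟨x, hy⟩, rfl⟩
    · apply Submodule.ext
      rintro ⟨x, hx⟩
      constructor
      · rintro ⟨a, ha⟩
        have h1 : f a = x := congrArg Subtype.val ha
        have h2 : x ∈ LinearMap.ker g := hfg ▸ ⟨a, h1⟩
        exact Subtype.ext h2
      · intro h
        have h1 : x ∈ LinearMap.ker g := congrArg Subtype.val h
        rw [← hfg] at h1
        obtain ⟨a, ha⟩ := h1
        exact ⟨a, Subtype.ext ha⟩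

theorem aux_ses_finite {A M B : Mdl Λ} (hA : Module.Finite Λ A.carrier)
    (hB : Module.Finite Λ B.carrier) (h : ExtOf Λ M A B) : Module.Finite Λ M.carrier := by
  obtain ⟨f, g, hf, hg, hfg⟩ := h
  exact Module.Finite.of_exact (LinearMap.exact_iff.2 hfg.symm) hg

theorem aux_leftPerp (N : Mdl Λ) : IsTorsionClass Λ
    {X | Module.Finite Λ X.carrier ∧ ∀ f : X.carrier →ₗ[Λ] N.carrier, f = 0} := by
  have hfac : ∀ M ∈ {X : Mdl Λ | Module.Finite Λ X.carrier ∧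
      ∀ f : X.carrier →ₗ[Λ] N.carrier, f = 0}, ∀ Q : Mdl Λ, IsFactor Λ M Q →
      Q ∈ {X : Mdl Λ | Module.Finite Λ X.carrier ∧ ∀ f : X.carrier →ₗ[Λ] N.carrier, f = 0} := by
    rintro M ⟨hM, h⟩ Q ⟨q, hq⟩
    refine ⟨Module.Finite.of_surjective q hq, fun f => ?_⟩
    have := h (f.comp q)
    ext y
    obtain ⟨x, rfl⟩ := hq y
    exact LinearMap.congr_fun this x
  refine ⟨fun M h => h.1, fun M h => ⟨inferInstance, fun f => ?_⟩, ?_, hfac, ?_⟩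
  · ext x
    rw [Subsingleton.elim x 0]; simp
  · rintro M hM Q ⟨e⟩
    exact hfac M hM Q ⟨e.toLinearMap, e.surjective⟩
  · rintro A ⟨hA, hA'⟩ B ⟨hB, hB'⟩ M hM
    refine ⟨aux_ses_finite Λ hA hB hM, fun φ => ?_⟩
    obtain ⟨f, g, hf, hg, hfg⟩ := hM
    have h1 := hA' (φ.comp f)
    have hk : LinearMap.ker g ≤ LinearMap.ker φ := by
      rw [← hfg]
      rintro _ ⟨a, rfl⟩
      exact LinearMap.congr_fun h1 a
    have h2 := hB' (((LinearMap.ker g).liftQ φ hk).comp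
      (g.quotKerEquivOfSurjective hg).symm.toLinearMap)
    ext x
    have h3 := LinearMap.congr_fun h2 (g x)
    have h4 : (g.quotKerEquivOfSurjective hg).symm (g x) = (LinearMap.ker g).mkQ x := by
      rw [LinearEquiv.symm_apply_eq]; rfl
    simpa [h4] using h3

theorem aux_filtGen_tors (M : Mdl Λ) (hM : Module.Finite Λ M.carrier) :
    IsTorsionClass Λ (FiltSet Λ (GenSet Λ M)) := by
  have hS : ∀ X ∈ GenSet Λ M, ∀ N : Mdl Λ, IsFactor Λ X N → N ∈ GenSet Λ M := by
    rintro X ⟨n, f, hf⟩ N ⟨g, hg⟩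
    exact ⟨n, g.comp f, hg.comp hf⟩
  refine ⟨?_, fun X h => .of_subsingleton X h, ?_, fun X h N hN => aux_filt_factor Λ hS h N hN,
    fun A hA B hB X hX => aux_filt_ext Λ hS hA hB X hX⟩
  · intro X hX
    change Filt Λ _ X at hX
    induction hX with
    | of_subsingleton X h => infer_instance
    | step X N Y hY hN e ih =>
      obtain ⟨e⟩ := e
      obtain ⟨n, f, hf⟩ := hY
      have h1 : Module.Finite Λ Y.carrier := Module.Finite.of_surjective f hf
      have h2 : Module.Finite Λ (X.carrier ⧸ N) := Module.Finite.equiv e.symm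
      have h3 : Module.Finite Λ N := ih
      exact Module.Finite.of_submodule_quotient N
  · rintro X hX N ⟨e⟩
    exact aux_filt_factor Λ hS hX N ⟨e.toLinearMap, e.surjective⟩

theorem aux_mem_filtGen (M : Mdl Λ) : M ∈ FiltSet Λ (GenSet Λ M) := by
  refine Filt.step M ⊥ M (aux_mem_gen Λ M) (.of_subsingleton _ ?_) ⟨Submodule.quotEquivOfEqBot _ rfl⟩
  exact inferInstanceAs (Subsingleton (⊥ : Submodule Λ M.carrier))

/-- Let `E` be a collection of pairwise hom-orthogonal bricks over `Λ`.
Then `⋁ {Filt(Gen(M)) : M ∈ E}` is the canonical join representation of its join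
`T = ⋁ {Filt(Gen(M)) : M ∈ E}` in `tors Λ`. -/
theorem statement19 (k : Type) [Field k] (Λ : Type) [Ring Λ] [Algebra k Λ]
    [FiniteDimensional k Λ] (E : Set (Mdl Λ)) (hE : ∀ M ∈ E, IsBrick Λ M)
    (horth : ∀ M ∈ E, ∀ M' ∈ E, M ≠ M' → HomOrthogonal Λ M M') :
    TorsCJR Λ ((fun M : Mdl Λ => FiltSet Λ (GenSet Λ M)) '' E) := by
  have hmem : ∀ M ∈ E, M ∈ TorsJoin Λ ((fun M : Mdl Λ => FiltSet Λ (GenSet Λ M)) '' E) :=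
    fun M hM T hT => hT.2 _ ⟨M, hM, rfl⟩ (aux_mem_filtGen Λ M)
  have hid : ∀ M ∈ E, ¬ ∀ f : M.carrier →ₗ[Λ] M.carrier, f = 0 := by
    intro M hM h
    obtain ⟨_, hn, _⟩ := hE M hM
    obtain ⟨x, hx⟩ := exists_ne (0 : M.carrier)
    exact hx (LinearMap.congr_fun (h LinearMap.id) x)
  refine ⟨?_, ?_, ?_⟩
  · rintro _ ⟨M, hM, rfl⟩
    exact aux_filtGen_tors Λ M (hE M hM).1
  · intro B hB
    refine ⟨fun X hX T hT => hX T ⟨hT.1, fun S hS => hT.2 S (hB.1 hS)⟩, fun hsub => ?_⟩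
    obtain ⟨_, ⟨M, hM, rfl⟩, hnot⟩ := Set.exists_of_ssubset hB
    have := hsub (hmem M hM) _ ⟨aux_leftPerp Λ M, ?_⟩
    · exact hid M hM this.2
    · intro S hS
      obtain ⟨M', hM', rfl⟩ := hB.1 hS
      refine aux_gen_sub Λ (aux_leftPerp Λ M) ⟨(hE M' hM').1, ?_⟩
      refine (horth M' hM' M hM ?_).1
      rintro rfl
      exact hnot hS
  · rintro B hB hj - _ ⟨M, hM, rfl⟩
    by_contra! hcon
    have hM' := hmem M hM
    rw [← hj] at hM'
    refine hid M hM (hM' _ ⟨aux_leftPerp Λ M, ?_⟩).2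
    intro b hb X hX
    refine ⟨(hB b hb).fin X hX, fun f => ?_⟩
    by_contra hf
    have hI : Mdl.of Λ (LinearMap.range f) ∈ b := (hB b hb).factor_closed X hX _
      ⟨(f.rangeRestrict : X.carrier →ₗ[Λ] LinearMap.range f), f.surjective_rangeRestrict⟩
    have hIT : Mdl.of Λ (LinearMap.range f) ∈
        TorsJoin Λ ((fun M : Mdl Λ => FiltSet Λ (GenSet Λ M)) '' E) := by
      rw [← hj]
      exact fun T hT => hT.2 b hb hI
    by_cases hall : ∀ M' ∈ E, ∀ φ : M'.carrier →ₗ[Λ] LinearMap.range f, φ = 0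
    · have h0 := (hIT _ ⟨aux_leftPerp Λ (Mdl.of Λ (LinearMap.range f)), ?_⟩).2
      · have h1 : (LinearMap.id : LinearMap.range f →ₗ[Λ] LinearMap.range f) = 0 := h0 _
        apply hf
        ext x
        exact congrArg Subtype.val (LinearMap.congr_fun h1 ⟨f x, x, rfl⟩)
      · rintro _ ⟨M', hM', rfl⟩
        exact aux_gen_sub Λ (aux_leftPerp Λ _) ⟨(hE M' hM').1, hall M' hM'⟩
    · push Not at hall
      obtain ⟨M', hM', φ, hφ⟩ := hall
      have hc : (LinearMap.range f).subtype.comp φ ≠ 0 := by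
        intro h
        apply hφ
        ext x
        exact LinearMap.congr_fun h x
      have hMM : M' = M := by
        by_contra hne
        exact hc ((horth M' hM' M hM hne).1 _)
      subst hMM
      have hbij := (hE M' hM).2.2 _ hc
      have hsurj : Function.Surjective f := by
        intro y
        obtain ⟨x, rfl⟩ := hbij.2 y
        exact (φ x).2
      exact hcon b hb (aux_gen_sub Λ (hB b hb) ((hB b hb).factor_closed X hX _ ⟨f, hsurj⟩))
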